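/- arXiv:2303.13687 — 3 statements merged into one kernel-verified Lean document; each statement's English description precedes it below -/
import Mathlib

section
/- Let I be the ideal of R = ℚ[x,y,z] generated by z², xz, x²y, x³ + y²z, y⁴. Then I has height 3, the minimal number of generators of I is 5, and the quotient ring R/I is a finite-dimensional ℚ-vector space. -/
/-!
Every prime containing `I` contains `x`, `y`, `z`, hence equals the maximal ideal
`𝔪 = (x, y, z)`, which has height 3: the dimension of the polynomial ring bounds it above, and
the chain `0 < (x) < (x, y) < 𝔪` (realized as kernels of substitution maps,
`three_le_height_ker`) bounds it below. The quotient is finite over `ℚ` because it is of finite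
type and generated by nilpotent, hence integral, elements.

For the number of generators, `genCoeffs` records the coefficients of `z²`, `xz`, `x²y`, `x³`, `y⁴`.
Modulo `𝔪 I` these five functionals are coordinates: `genCoeffs (r * f) = r(0) • genCoeffs f` for
`f ∈ I`, while `genCoeffs` maps `I` onto `ℚ⁵`. So the images of any generating set of `I` span `ℚ⁵`.
-/

open MvPolynomial

/-- The height of an ideal: the infimum of the heights of prime ideals containing it. -/
noncomputable def idealHeight {R : Type*} [CommRing R] (I : Ideal R) : ℕ∞ :=
  ⨅ p ∈ {p : PrimeSpectrum R | I ≤ p.asIdeal}, Order.height p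

/-- The minimal number of generators of an ideal: the smallest cardinality of a
set of elements of the ring generating it as an ideal. -/
noncomputable def minNumGens {R : Type*} [CommRing R] (I : Ideal R) : ℕ :=
  sInf {n : ℕ | ∃ s : Finset R, s.card = n ∧ Ideal.span (s : Set R) = I}

noncomputable abbrev x : MvPolynomial (Fin 3) ℚ := X 0
noncomputable abbrev y : MvPolynomial (Fin 3) ℚ := X 1
noncomputable abbrev z : MvPolynomial (Fin 3) ℚ := X 2

/-- The exponent vector of the monomial `x ^ a * y ^ b * z ^ c`. -/
noncomputable def expo (a b c : ℕ) : Fin 3 →₀ ℕ := Finsupp.equivFunOnFinite.symm ![a, b, c]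

lemma expo_le (a b c a' b' c' : ℕ) :
    expo a b c ≤ expo a' b' c' ↔ a ≤ a' ∧ b ≤ b' ∧ c ≤ c' := by
  simp [expo, Finsupp.le_def, Fin.forall_fin_succ]

lemma monomial_expo (a b c : ℕ) :
    (monomial (expo a b c) (1 : ℚ)) = x ^ a * y ^ b * z ^ c := by
  rw [monomial_eq]
  simp [expo, Finsupp.prod_fintype, Fin.prod_univ_three]

/-- The coefficients of `z²`, `xz`, `x²y`, `x³`, `y⁴`. -/
noncomputable def genCoeffs : MvPolynomial (Fin 3) ℚ →ₗ[ℚ] (Fin 5 → ℚ) :=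
  LinearMap.pi ![lcoeff ℚ (expo 0 0 2), lcoeff ℚ (expo 1 0 1), lcoeff ℚ (expo 2 1 0),
    lcoeff ℚ (expo 3 0 0), lcoeff ℚ (expo 0 4 0)]

/-- On an element of `I` written in terms of the generators, `genCoeffs` reads off the constant
terms of the multipliers. -/
lemma genCoeffs_comb (a b c d e : MvPolynomial (Fin 3) ℚ) :
    genCoeffs (a * z ^ 2 + b * (x * z) + c * (x ^ 2 * y) + d * (x ^ 3 + y ^ 2 * z) + e * y ^ 4) =
      ![constantCoeff a, constantCoeff b, constantCoeff c, constantCoeff d, constantCoeff e] := by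
  have h1 : z ^ 2 = monomial (expo 0 0 2) (1 : ℚ) := by simp [monomial_expo]
  have h2 : x * z = monomial (expo 1 0 1) (1 : ℚ) := by simp [monomial_expo]
  have h3 : x ^ 2 * y = monomial (expo 2 1 0) (1 : ℚ) := by simp [monomial_expo]
  have h4 : x ^ 3 = monomial (expo 3 0 0) (1 : ℚ) := by simp [monomial_expo]
  have h5 : y ^ 2 * z = monomial (expo 0 2 1) (1 : ℚ) := by simp [monomial_expo]
  have h6 : y ^ 4 = monomial (expo 0 4 0) (1 : ℚ) := by simp [monomial_expo]
  rw [h1, h2, h3, h4, h5, h6]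
  ext i
  fin_cases i <;>
    simp [genCoeffs, lcoeff, mul_add, coeff_mul_monomial', expo_le,
      constantCoeff_eq]

lemma mem_span_iff_comb (f : MvPolynomial (Fin 3) ℚ) :
    f ∈ Ideal.span {z^2, x*z, x^2*y, x^3 + y^2*z, y^4} ↔ ∃ a b c d e,
      f = a * z ^ 2 + b * (x * z) + c * (x ^ 2 * y) + d * (x ^ 3 + y ^ 2 * z) + e * y ^ 4 := by
  simp only [Ideal.mem_span_insert, Ideal.mem_span_singleton']
  constructor
  · rintro ⟨a, _, ⟨b, _, ⟨c, _, ⟨d, _, ⟨e, rfl⟩, rfl⟩, rfl⟩, rfl⟩, rfl⟩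
    exact ⟨a, b, c, d, e, by ring⟩
  · rintro ⟨a, b, c, d, e, rfl⟩
    exact ⟨a, _, ⟨b, _, ⟨c, _, ⟨d, _, ⟨e, rfl⟩, rfl⟩, rfl⟩, rfl⟩, by ring⟩

lemma genCoeffs_mul (r f : MvPolynomial (Fin 3) ℚ)
    (hf : f ∈ Ideal.span {z^2, x*z, x^2*y, x^3 + y^2*z, y^4}) :
    genCoeffs (r * f) = constantCoeff r • genCoeffs f := by
  obtain ⟨a, b, c, d, e, rfl⟩ := (mem_span_iff_comb f).1 hf
  have h : r * (a * z ^ 2 + b * (x * z) + c * (x ^ 2 * y) + d * (x ^ 3 + y ^ 2 * z) + e * y ^ 4) =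
      (r * a) * z ^ 2 + (r * b) * (x * z) + (r * c) * (x ^ 2 * y) +
        (r * d) * (x ^ 3 + y ^ 2 * z) + (r * e) * y ^ 4 := by ring
  rw [h, genCoeffs_comb, genCoeffs_comb]
  simp

lemma five_le_card (s : Finset (MvPolynomial (Fin 3) ℚ))
    (hs : Ideal.span (s : Set (MvPolynomial (Fin 3) ℚ)) =
      Ideal.span {z^2, x*z, x^2*y, x^3 + y^2*z, y^4}) : 5 ≤ s.card := by
  classical
  have hmem : ∀ f ∈ Ideal.span (s : Set (MvPolynomial (Fin 3) ℚ)),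
      genCoeffs f ∈ Submodule.span ℚ ((s.image genCoeffs : Finset (Fin 5 → ℚ)) : Set (Fin 5 → ℚ)) := by
    intro f hf
    induction hf using Submodule.span_induction with
    | mem f hf => exact Submodule.subset_span (by simpa using ⟨f, hf, rfl⟩)
    | zero => simp
    | add f g _ _ hf hg => rw [map_add]; exact add_mem hf hg
    | smul r f hf ih =>
      rw [smul_eq_mul, genCoeffs_mul r f (hs ▸ hf)]
      exact Submodule.smul_mem _ _ ih
  have htop : Submodule.span ℚ ((s.image genCoeffs : Finset (Fin 5 → ℚ)) : Set (Fin 5 → ℚ)) = ⊤ := by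
    rw [eq_top_iff]
    rintro v -
    have := hmem _ (hs ▸ (mem_span_iff_comb _).2 ⟨C (v 0), C (v 1), C (v 2), C (v 3), C (v 4), rfl⟩)
    rw [genCoeffs_comb] at this
    convert this using 1
    ext i
    fin_cases i <;> simp
  have h1 := finrank_span_finset_le_card (R := ℚ) (s.image genCoeffs)
  rw [Set.finrank, htop, finrank_top, Module.finrank_fin_fun] at h1
  exact h1.trans Finset.card_image_le

/-- The chain `0 < (x) < (x, y) < (x, y, z)`, each ideal being the kernel of the substitution
that sends the corresponding variables to `0`. -/
lemma three_le_height_ker :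
    3 ≤ (RingHom.ker (constantCoeff : MvPolynomial (Fin 3) ℚ →+* ℚ)).height := by
  let f1 : MvPolynomial (Fin 3) ℚ →ₐ[ℚ] MvPolynomial (Fin 3) ℚ := aeval ![0, y, z]
  let f2 : MvPolynomial (Fin 3) ℚ →ₐ[ℚ] MvPolynomial (Fin 3) ℚ := aeval ![0, 0, z]
  have hf2 : ∀ p, f2 p = f2 (f1 p) := by
    have : f2 = f2.comp f1 := by
      ext i : 1
      fin_cases i <;> simp [f1, f2]
    exact fun p => DFunLike.congr_fun this p
  have hf3 : ∀ p, constantCoeff p = constantCoeff (f2 p) := by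
    have : (constantCoeff : MvPolynomial (Fin 3) ℚ →+* ℚ) =
        constantCoeff.comp (f2 : MvPolynomial (Fin 3) ℚ →+* MvPolynomial (Fin 3) ℚ) := by
      ext i : 1
      · ext; simp [f2]
      · fin_cases i <;> simp [f2]
    exact fun p => DFunLike.congr_fun this p
  have h01 : (⊥ : Ideal (MvPolynomial (Fin 3) ℚ)) < RingHom.ker f1 := by
    refine bot_lt_iff_ne_bot.2 fun h => X_ne_zero (R := ℚ) (0 : Fin 3) ?_
    rw [← Ideal.mem_bot, ← h, RingHom.mem_ker]
    simp [f1]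
  have h12 : RingHom.ker f1 < RingHom.ker f2 := by
    refine SetLike.lt_iff_le_and_exists.2 ⟨fun p hp => ?_, y, ?_, ?_⟩
    · rw [RingHom.mem_ker] at hp ⊢
      rw [hf2, hp, map_zero]
    · simp [f2, RingHom.mem_ker]
    · simp [f1, RingHom.mem_ker]
  have h23 : RingHom.ker f2 < RingHom.ker (constantCoeff : MvPolynomial (Fin 3) ℚ →+* ℚ) := by
    refine SetLike.lt_iff_le_and_exists.2 ⟨fun p hp => ?_, z, ?_, ?_⟩
    · rw [RingHom.mem_ker] at hp ⊢
      rw [hf3, hp, map_zero]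
    · simp [RingHom.mem_ker]
    · simp [f2, RingHom.mem_ker]
  have : (RingHom.ker f1).IsPrime := RingHom.ker_isPrime f1
  have : (RingHom.ker f2).IsPrime := RingHom.ker_isPrime f2
  have : (RingHom.ker (constantCoeff : MvPolynomial (Fin 3) ℚ →+* ℚ)).IsPrime :=
    RingHom.ker_isPrime _
  have g1 := Ideal.height_add_one_le_of_lt_of_isPrime h01
  have g2 := Ideal.height_add_one_le_of_lt_of_isPrime h12
  have g3 := Ideal.height_add_one_le_of_lt_of_isPrime h23
  calc (3 : ℕ∞) = 0 + 1 + 1 + 1 := by norm_num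
    _ ≤ (⊥ : Ideal (MvPolynomial (Fin 3) ℚ)).height + 1 + 1 + 1 := by gcongr; exact zero_le
    _ ≤ (RingHom.ker f1).height + 1 + 1 := by gcongr
    _ ≤ (RingHom.ker f2).height + 1 := by gcongr
    _ ≤ _ := g3

lemma height_ker :
    (RingHom.ker (constantCoeff : MvPolynomial (Fin 3) ℚ →+* ℚ)).height = 3 := by
  refine le_antisymm ?_ three_le_height_ker
  have hp : (RingHom.ker (constantCoeff : MvPolynomial (Fin 3) ℚ →+* ℚ)).IsPrime :=
    RingHom.ker_isPrime _
  have h := Ideal.height_le_ringKrullDim_of_ne_top hp.ne_top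
  rw [MvPolynomial.ringKrullDim_of_isNoetherianRing, ringKrullDim_eq_zero_of_field] at h
  simp only [Nat.card_eq_fintype_card, Fintype.card_fin, zero_add] at h
  exact WithBot.coe_le_coe.1 h

lemma eq_ker_of_X_mem (p : Ideal (MvPolynomial (Fin 3) ℚ)) [hp : p.IsPrime]
    (h : ∀ i, X i ∈ p) : p = RingHom.ker (constantCoeff : MvPolynomial (Fin 3) ℚ →+* ℚ) := by
  have hmax : (RingHom.ker (constantCoeff : MvPolynomial (Fin 3) ℚ →+* ℚ)).IsMaximal :=
    RingHom.ker_isMaximal_of_surjective _ fun r => ⟨C r, by simp⟩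
  refine (hmax.eq_of_le hp.ne_top ?_).symm
  have hsub : ∀ f : MvPolynomial (Fin 3) ℚ, f - C (constantCoeff f) ∈ p := by
    intro f
    induction f using MvPolynomial.induction_on with
    | C a => simp
    | add f g hf hg =>
      rw [map_add, map_add, add_sub_add_comm]
      exact add_mem hf hg
    | mul_X f i _ => simpa using p.mul_mem_left f (h i)
  intro f hf
  rw [RingHom.mem_ker] at hf
  simpa [hf] using hsub f

theorem stmt_1 (I : Ideal (MvPolynomial (Fin 3) ℚ))
    (hI : I = Ideal.span {z^2, x*z, x^2*y, x^3 + y^2*z, y^4}) :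
    idealHeight I = 3 ∧ minNumGens I = 5 ∧
    FiniteDimensional ℚ (MvPolynomial (Fin 3) ℚ ⧸ I) := by
  have hpow : ∀ i : Fin 3, (X i : MvPolynomial (Fin 3) ℚ) ^ 4 ∈ I := by
    intro i
    rw [hI, mem_span_iff_comb]
    fin_cases i
    -- `x⁴ = x (x³ + y²z) - y² (xz)`
    · exact ⟨0, -y ^ 2, 0, x, 0, by simp only [Fin.zero_eta]; ring⟩
    · exact ⟨0, 0, 0, 0, 1, by simp⟩
    · exact ⟨z ^ 2, 0, 0, 0, 0, by simp only [Fin.reduceFinMk]; ring⟩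
  refine ⟨?_, ?_, ?_⟩
  · have hprime : (RingHom.ker (constantCoeff : MvPolynomial (Fin 3) ℚ →+* ℚ)).IsPrime :=
      RingHom.ker_isPrime _
    have hset : {p : PrimeSpectrum (MvPolynomial (Fin 3) ℚ) | I ≤ p.asIdeal} =
        {⟨RingHom.ker constantCoeff, hprime⟩} := by
      ext p
      simp only [Set.mem_ofPred_eq, Set.mem_singleton_iff, PrimeSpectrum.ext_iff]
      refine ⟨fun h => ?_, fun h => ?_⟩
      · exact eq_ker_of_X_mem _ fun i => p.isPrime.mem_of_pow_mem 4 (h (hpow i))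
      · rw [h, hI, Ideal.span_le]
        rintro _ (rfl | rfl | rfl | rfl | rfl) <;> simp [RingHom.mem_ker]
    rw [idealHeight, hset, iInf_singleton, ← PrimeSpectrum.height_eq_orderHeight]
    exact height_ker
  · classical
    let s : Finset (MvPolynomial (Fin 3) ℚ) := {z^2, x*z, x^2*y, x^3 + y^2*z, y^4}
    have hs : Ideal.span (s : Set (MvPolynomial (Fin 3) ℚ)) = I := by simp [s, hI]
    refine le_antisymm (le_trans (Nat.sInf_le ⟨s, rfl, hs⟩) Finset.card_le_five) ?_
    refine le_csInf ⟨_, s, rfl, hs⟩ ?_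
    rintro _ ⟨t, rfl, ht⟩
    exact five_le_card t (ht.trans hI)
  · have hint : Algebra.IsIntegral ℚ (MvPolynomial (Fin 3) ℚ ⧸ I) := by
      refine ⟨fun q => ?_⟩
      obtain ⟨p, rfl⟩ := Ideal.Quotient.mk_surjective q
      induction p using MvPolynomial.induction_on with
      | C a => exact isIntegral_algebraMap (R := ℚ) (A := MvPolynomial (Fin 3) ℚ ⧸ I) (x := a)
      | add p q hp hq => rw [map_add]; exact hp.add hq
      | mul_X p i hp =>
        rw [map_mul]
        refine hp.mul (IsIntegral.of_pow (n := 4) (by norm_num) ?_)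
        rw [← map_pow, Ideal.Quotient.eq_zero_iff_mem.2 (hpow i)]
        exact isIntegral_zero
    exact Algebra.IsIntegral.finite
end

section
/- Let I be the ideal of R = ℚ[x,y,z] generated by xy, x², z³, yz², y³z, y⁴. Then I has height 3, the minimal number of generators of I is 6, and the quotient ring R/I is a finite-dimensional ℚ-vector space. -/
/-!
A prime containing `I` contains `x`, `y`, `z`, because `I` contains a power of each. Hence it lies
above the chain of primes `0 < (x) < (x, y) < (x, y, z)`, realised here as the kernels
`killPrime k` of the substitutions killing the first `k` variables, and has height at least `3`; it
has height at most `3 = dim ℚ[x,y,z]`. So `I` has height `3`.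

The six generators are monomials whose exponents form an antichain, so the coefficients at these
exponents satisfy `coeff e (g * f) = g(0) * coeff e f` for every `f ∈ I` and every `g`
(`coeff_mul_of_mem`). The resulting map `I → ℚ⁶` therefore sends any generating set of `I` to a
`ℚ`-spanning set of its image, which is all of `ℚ⁶`; a generating set has at least `6` elements.

Finally `R/I` is a `ℚ`-algebra generated by three nilpotent, hence integral, elements, so it is
finite-dimensional.
-/

open MvPolynomial

/-! ### Height -/

/-- The substitution `Xᵢ ↦ 0` for `i < k`, fixing the remaining variables. -/
noncomputable def killVars (k : ℕ) : MvPolynomial (Fin 3) ℚ →ₐ[ℚ] MvPolynomial (Fin 3) ℚ :=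
  aeval fun i => if i.val < k then 0 else X i

/-- The prime ideal generated by the first `k` variables, as the kernel of `killVars k`. -/
noncomputable def killPrime (k : ℕ) : PrimeSpectrum (MvPolynomial (Fin 3) ℚ) :=
  ⟨RingHom.ker (killVars k), RingHom.ker_isPrime _⟩

lemma killPrime_le_of_X_mem (k : ℕ) (p : PrimeSpectrum (MvPolynomial (Fin 3) ℚ))
    (h : ∀ i : Fin 3, i.val < k → (X i : MvPolynomial (Fin 3) ℚ) ∈ p.asIdeal) :
    killPrime k ≤ p := by
  -- Modulo `p` the substitution `killVars k` is the identity, as this holds on each variable.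
  have key : (Ideal.Quotient.mkₐ ℚ p.asIdeal).comp (killVars k) = Ideal.Quotient.mkₐ ℚ p.asIdeal := by
    ext i
    by_cases hi : i.val < k
    · have := Ideal.Quotient.eq_zero_iff_mem.mpr (h i hi)
      simp [killVars, hi, this]
    · simp [killVars, hi]
  intro f hf
  have hf' : killVars k f = 0 := hf
  have := DFunLike.congr_fun key f
  simp only [AlgHom.comp_apply, hf', map_zero] at this
  exact Ideal.Quotient.eq_zero_iff_mem.mp this.symm

lemma X_mem_killPrime (k : ℕ) (i : Fin 3) :
    (X i : MvPolynomial (Fin 3) ℚ) ∈ (killPrime k).asIdeal ↔ i.val < k := by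
  change killVars k (X i) = 0 ↔ _
  by_cases hi : i.val < k <;> simp [killVars, hi]

lemma killPrime_lt_succ (k : ℕ) (hk : k < 3) : killPrime k < killPrime (k + 1) := by
  refine lt_of_le_not_ge (killPrime_le_of_X_mem _ _ fun i hi => ?_) fun h => ?_
  · rw [X_mem_killPrime]; omega
  · have h1 := h ((X_mem_killPrime (k + 1) ⟨k, hk⟩).mpr (Nat.lt_succ_self k))
    rw [X_mem_killPrime] at h1
    exact lt_irrefl _ h1

lemma le_height_killPrime (k : ℕ) (hk : k ≤ 3) : (k : ℕ∞) ≤ Order.height (killPrime k) := by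
  induction k with
  | zero => simp
  | succ k ih =>
    have h := Order.height_add_one_le (killPrime_lt_succ k (by omega))
    push_cast
    exact (add_le_add_left (ih (by omega)) 1).trans h

lemma height_le_three (p : PrimeSpectrum (MvPolynomial (Fin 3) ℚ)) : Order.height p ≤ 3 := by
  have h : (Order.height p : WithBot ℕ∞) ≤ ringKrullDim (MvPolynomial (Fin 3) ℚ) :=
    Order.height_le_krullDim p
  rw [MvPolynomial.ringKrullDim_of_isNoetherianRing] at h
  simp only [ringKrullDim_eq_zero_of_field, Nat.card_eq_fintype_card, Fintype.card_fin, zero_add] at h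
  exact WithBot.coe_le_coe.mp h

lemma idealHeight_eq_three (I : Ideal (MvPolynomial (Fin 3) ℚ))
    (hpow : ∀ i : Fin 3, ∃ n : ℕ, (X i : MvPolynomial (Fin 3) ℚ) ^ n ∈ I)
    (hle : I ≤ (killPrime 3).asIdeal) : idealHeight I = 3 := by
  apply le_antisymm
  · exact (iInf₂_le (killPrime 3) hle).trans (height_le_three _)
  · refine le_iInf₂ fun p hp => (le_height_killPrime 3 le_rfl).trans ?_
    refine Order.height_mono (killPrime_le_of_X_mem 3 p fun i _ => ?_)
    obtain ⟨n, hn⟩ := hpow i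
    exact p.isPrime.mem_of_pow_mem n (hp hn)

/-! ### Minimal number of generators -/

/-- The exponents of the monomials `xy, x², z³, yz², y³z, y⁴`. -/
def genExpFun : Fin 6 → Fin 3 → ℕ :=
  ![![1, 1, 0], ![2, 0, 0], ![0, 0, 3], ![0, 1, 2], ![0, 3, 1], ![0, 4, 0]]

/-- The exponents `genExpFun` as finitely supported functions. -/
noncomputable def genExp (j : Fin 6) : Fin 3 →₀ ℕ := Finsupp.equivFunOnFinite.symm (genExpFun j)

lemma genExp_antichain {j k : Fin 6} (h : genExp j ≤ genExp k) : j = k := by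
  have h' : ∀ i, genExpFun j i ≤ genExpFun k i := fun i => h i
  revert j k
  have : ∀ j k : Fin 6, (∀ i, genExpFun j i ≤ genExpFun k i) → j = k := by decide
  exact fun {j k} _ h' => this j k h'

lemma monomial_eq_prod (v : Fin 3 → ℕ) :
    monomial (Finsupp.equivFunOnFinite.symm v) (1 : ℚ) = X 0 ^ v 0 * X 1 ^ v 1 * X 2 ^ v 2 := by
  rw [monomial_eq, Finsupp.prod_fintype _ _ (by simp)]
  simp [Fin.prod_univ_three]

lemma span_eq_span_monomial :
    (Ideal.span {x*y, x^2, z^3, y*z^2, y^3*z, y^4} : Ideal (MvPolynomial (Fin 3) ℚ)) =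
      Ideal.span ((fun s => monomial s (1 : ℚ)) '' Set.range genExp) := by
  congr 1
  rw [← Set.range_comp]
  have h : ∀ j, ((fun s => monomial s (1 : ℚ)) ∘ genExp) j =
      (![x*y, x^2, z^3, y*z^2, y^3*z, y^4] : Fin 6 → MvPolynomial (Fin 3) ℚ) j := by
    intro j
    simp only [Function.comp, genExp, monomial_eq_prod]
    fin_cases j <;> simp [genExpFun]
  rw [funext h]
  simp only [Matrix.range_cons, Matrix.range_empty, Set.union_empty, Set.singleton_union]

/-- No monomial of an element of the ideal properly divides one of the six generators, so at these
exponents multiplication by `g` acts on the coefficients as multiplication by `g(0)`. -/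
lemma coeff_mul_of_mem {f : MvPolynomial (Fin 3) ℚ}
    (hf : f ∈ Ideal.span ((fun s => monomial s (1 : ℚ)) '' Set.range genExp))
    (g : MvPolynomial (Fin 3) ℚ) (j : Fin 6) :
    coeff (genExp j) (g * f) = constantCoeff g * coeff (genExp j) f := by
  classical
  rw [coeff_mul, Finset.sum_eq_single (0, genExp j)]
  · rfl
  · rintro ⟨a, b⟩ hab hne
    rw [Finset.HasAntidiagonal.mem_antidiagonal] at hab
    simp only at hab ⊢
    by_contra hcon
    have hb : b ∈ f.support := mem_support_iff.mpr (right_ne_zero_of_mul hcon)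
    obtain ⟨_, ⟨k, rfl⟩, hk⟩ := mem_ideal_span_monomial_image.mp hf b hb
    have hbj : b ≤ genExp j := hab ▸ le_add_self
    obtain rfl := genExp_antichain (hk.trans hbj)
    have hbe : b = genExp k := le_antisymm hbj hk
    subst hbe
    exact hne (Prod.ext (by simpa using hab) rfl)
  · intro h
    simp at h

/-- The `ℚ`-linear map recording the coefficients at the six generators. -/
noncomputable def genCoeff : MvPolynomial (Fin 3) ℚ →ₗ[ℚ] (Fin 6 → ℚ) :=
  LinearMap.pi fun j => lcoeff ℚ (genExp j)

lemma genCoeff_monomial (j : Fin 6) : genCoeff (monomial (genExp j) 1) = Pi.single j 1 := by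
  classical
  ext k
  by_cases h : j = k
  · subst h; simp [genCoeff]
  · have hne : genExp j ≠ genExp k := fun h' => h (genExp_antichain h'.le)
    simp [genCoeff, coeff_monomial, hne, Ne.symm h]

lemma six_le_card (s : Finset (MvPolynomial (Fin 3) ℚ))
    (hs : Ideal.span (s : Set (MvPolynomial (Fin 3) ℚ)) =
      Ideal.span ((fun s => monomial s (1 : ℚ)) '' Set.range genExp)) : 6 ≤ s.card := by
  classical
  have hmem : ∀ f ∈ Ideal.span (s : Set (MvPolynomial (Fin 3) ℚ)),
      genCoeff f ∈ Submodule.span ℚ ((s.image genCoeff : Finset _) : Set (Fin 6 → ℚ)) := by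
    intro f hf
    induction hf using Submodule.span_induction with
    | mem f hf => exact Submodule.subset_span (by simpa using ⟨f, hf, rfl⟩)
    | zero => simp
    | add f g _ _ hf hg => rw [map_add]; exact add_mem hf hg
    | smul g f hf ih =>
      have : genCoeff (g • f) = constantCoeff g • genCoeff f := by
        ext j
        exact coeff_mul_of_mem (hs ▸ hf) g j
      rw [this]
      exact Submodule.smul_mem _ _ ih
  have htop : Submodule.span ℚ ((s.image genCoeff : Finset _) : Set (Fin 6 → ℚ)) = ⊤ := by
    rw [eq_top_iff, ← (Pi.basisFun ℚ (Fin 6)).span_eq, Submodule.span_le]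
    rintro _ ⟨j, rfl⟩
    rw [Pi.basisFun_apply, ← genCoeff_monomial]
    exact hmem _ (hs ▸ Ideal.subset_span ⟨_, ⟨j, rfl⟩, rfl⟩)
  have h := finrank_span_finset_le_card (R := ℚ) (s.image genCoeff)
  rw [Set.finrank, htop, finrank_top, Module.finrank_fin_fun] at h
  exact h.trans Finset.card_image_le

lemma minNumGens_eq_six :
    minNumGens (Ideal.span ((fun s => monomial s (1 : ℚ)) '' Set.range genExp)) = 6 := by
  classical
  let s : Finset (MvPolynomial (Fin 3) ℚ) := Finset.univ.image fun j => monomial (genExp j) (1 : ℚ)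
  have hspan : Ideal.span (s : Set (MvPolynomial (Fin 3) ℚ)) =
      Ideal.span ((fun s => monomial s (1 : ℚ)) '' Set.range genExp) := by
    rw [← Set.range_comp]
    simp [s, Function.comp_def]
  have hcard : s.card = 6 :=
    le_antisymm (Finset.card_image_le.trans (by simp)) (six_le_card s hspan)
  refine le_antisymm (Nat.sInf_le ⟨s, hcard, hspan⟩) (le_csInf ⟨6, s, hcard, hspan⟩ ?_)
  rintro _ ⟨t, rfl, ht⟩
  exact six_le_card t ht

/-! ### Finite dimension of the quotient -/

lemma finiteDimensional_quotient (I : Ideal (MvPolynomial (Fin 3) ℚ))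
    (hpow : ∀ i : Fin 3, ∃ n : ℕ, 0 < n ∧ (X i : MvPolynomial (Fin 3) ℚ) ^ n ∈ I) :
    FiniteDimensional ℚ (MvPolynomial (Fin 3) ℚ ⧸ I) := by
  have hint : Algebra.IsIntegral ℚ (MvPolynomial (Fin 3) ℚ ⧸ I) := by
    refine ⟨fun q => ?_⟩
    obtain ⟨f, rfl⟩ := Ideal.Quotient.mk_surjective q
    induction f using MvPolynomial.induction_on with
    | C a => exact isIntegral_algebraMap (R := ℚ) (A := MvPolynomial (Fin 3) ℚ ⧸ I) (x := a)
    | add f g hf hg => rw [map_add]; exact hf.add hg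
    | mul_X f i hf =>
      rw [map_mul]
      refine hf.mul ?_
      obtain ⟨n, hn, hX⟩ := hpow i
      refine IsIntegral.of_pow hn ?_
      rw [← map_pow, Ideal.Quotient.eq_zero_iff_mem.mpr hX]
      exact isIntegral_zero
  exact Algebra.IsIntegral.finite

theorem stmt_6 (I : Ideal (MvPolynomial (Fin 3) ℚ))
    (hI : I = Ideal.span {x*y, x^2, z^3, y*z^2, y^3*z, y^4}) :
    idealHeight I = 3 ∧ minNumGens I = 6 ∧
    FiniteDimensional ℚ (MvPolynomial (Fin 3) ℚ ⧸ I) := by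
  have hpow : ∀ i : Fin 3, ∃ n : ℕ, 0 < n ∧ (X i : MvPolynomial (Fin 3) ℚ) ^ n ∈ I := by
    intro i
    rw [hI]
    fin_cases i
    · exact ⟨2, by norm_num, Ideal.subset_span (by simp)⟩
    · exact ⟨4, by norm_num, Ideal.subset_span (by simp)⟩
    · exact ⟨3, by norm_num, Ideal.subset_span (by simp)⟩
  refine ⟨idealHeight_eq_three I (fun i => (hpow i).imp fun _ h => h.2) ?_, ?_,
    finiteDimensional_quotient I hpow⟩
  · rw [hI, Ideal.span_le]
    intro f hf
    change killVars 3 f = 0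
    simp only [Set.mem_insert_iff, Set.mem_singleton_iff] at hf
    rcases hf with rfl | rfl | rfl | rfl | rfl | rfl <;> simp [killVars]
  · rw [hI, span_eq_span_monomial]
    exact minNumGens_eq_six
end

section
/- Let I be the ideal of R = ℚ[x,y,z] generated by z³, xz², x²z, xy², x²y, x³ − xyz, y⁴. Then I has height 3, the minimal number of generators of I is 7, and the quotient ring R/I is a finite-dimensional ℚ-vector space. -/
/-!
Modulo `I` every variable is nilpotent: `z³, y⁴ ∈ I`, and
`x⁴ = x (x³ - xyz) + z (x²y) ∈ I`.  Hence `R/I` is integral and of finite type over `ℚ`, so it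
is finite-dimensional, and the only prime containing `I` is the ideal `(x, y, z)`
(the kernel `vanIdeal 3` of evaluation at the origin).  This prime has height `3`: at most `3`
because `dim R = 3`, at least `3` because of the chain `0 < (x) < (x, y) < (x, y, z)`
of kernels of substitutions of variables by zero.

For the number of generators, the seven monomials `z³, xz², x²z, xy², x²y, x³, y⁴` have
the property that no monomial strictly dividing one of them occurs in an element of `I`
(`coeff_eq_zero_of_mem`).  Therefore the `ℚ`-linear map `φ : R → ℚ⁷` reading off
these seven coefficients satisfies `φ (r f) = r(0) φ(f)` for `f ∈ I` (`phi_mul`), so a set generating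
`I` as an ideal has image spanning `φ(I)` over `ℚ`.  As `φ` sends the seven
given generators to the standard basis, at least seven generators are needed.
-/

open MvPolynomial

lemma eq_expo_iff (d : Fin 3 →₀ ℕ) (a b c : ℕ) :
    expo a b c = d ↔ a = d 0 ∧ b = d 1 ∧ c = d 2 := by
  constructor
  · rintro rfl
    simp [expo]
  · rintro ⟨rfl, rfl, rfl⟩
    ext i
    fin_cases i <;> simp [expo]

lemma coeff_mono (d : Fin 3 →₀ ℕ) (a b c : ℕ) :
    coeff d (x ^ a * y ^ b * z ^ c) = if a = d 0 ∧ b = d 1 ∧ c = d 2 then 1 else 0 := by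
  have h : x ^ a * y ^ b * z ^ c = monomial (expo a b c) 1 := by
    rw [monomial_eq, Finsupp.prod_fintype _ _ (by simp)]
    simp [Fin.prod_univ_three, expo]
  rw [h, coeff_monomial]
  simp only [eq_expo_iff]

/-- The seven generators, in the order in which the ideal is presented. -/
noncomputable def gen : Fin 7 → MvPolynomial (Fin 3) ℚ :=
  ![z^3, x*z^2, x^2*z, x*y^2, x^2*y, x^3 - x*y*z, y^4]

/-- The monomial singled out in each generator. -/
noncomputable def genExpo : Fin 7 → (Fin 3 →₀ ℕ) :=
  ![expo 0 0 3, expo 1 0 2, expo 2 0 1, expo 1 2 0, expo 2 1 0, expo 3 0 0, expo 0 4 0]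

lemma span_range_gen : Ideal.span (Set.range gen) =
    Ideal.span {z^3, x*z^2, x^2*z, x*y^2, x^2*y, x^3 - x*y*z, y^4} := by
  congr 1
  ext f
  simp only [gen, Set.mem_range, Fin.exists_fin_succ, Set.mem_insert_iff, Set.mem_singleton_iff]
  simp [eq_comm]

/-- Uniform formula for the coefficients of the generators, obtained by writing each as a
combination of monomials `x^a y^b z^c`. -/
lemma coeff_gen (d : Fin 3 →₀ ℕ) (j : Fin 7) : coeff d (gen j) =
    ![if 0 = d 0 ∧ 0 = d 1 ∧ 3 = d 2 then 1 else 0,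
      if 1 = d 0 ∧ 0 = d 1 ∧ 2 = d 2 then 1 else 0,
      if 2 = d 0 ∧ 0 = d 1 ∧ 1 = d 2 then 1 else 0,
      if 1 = d 0 ∧ 2 = d 1 ∧ 0 = d 2 then 1 else 0,
      if 2 = d 0 ∧ 1 = d 1 ∧ 0 = d 2 then 1 else 0,
      (if 3 = d 0 ∧ 0 = d 1 ∧ 0 = d 2 then 1 else 0) -
        (if 1 = d 0 ∧ 1 = d 1 ∧ 1 = d 2 then 1 else 0),
      if 0 = d 0 ∧ 4 = d 1 ∧ 0 = d 2 then 1 else 0] j := by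
  simp only [← coeff_mono, ← coeff_sub]
  fin_cases j <;> simp [gen]

/-- The exponents `d` of total degree at most `2`, together with those of the powers `1, …, y³`:
a down-closed set containing every proper divisor of the seven monomials `genExpo`. -/
def IsLow (d : Fin 3 →₀ ℕ) : Prop := d 0 + d 1 + d 2 ≤ 2 ∨ (d 0 = 0 ∧ d 2 = 0 ∧ d 1 ≤ 3)

lemma IsLow.mono {d d' : Fin 3 →₀ ℕ} (h : IsLow d) (hd : d' ≤ d) : IsLow d' := by
  have h0 := hd 0
  have h1 := hd 1
  have h2 := hd 2
  unfold IsLow at *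
  omega

lemma isLow_of_lt_genExpo (i : Fin 7) {d : Fin 3 →₀ ℕ} (hd : d ≤ genExpo i)
    (hne : d ≠ genExpo i) : IsLow d := by
  have h0 := hd 0
  have h1 := hd 1
  have h2 := hd 2
  unfold IsLow
  fin_cases i <;> simp [genExpo] at h0 h1 h2 hne <;>
    rw [eq_comm, eq_expo_iff] at hne <;> simp [expo] at h0 h1 h2 <;> omega

/-- Since `IsLow` is down-closed, the polynomials without low terms form an ideal; it
contains the generators. -/
lemma coeff_eq_zero_of_mem {f : MvPolynomial (Fin 3) ℚ} (hf : f ∈ Ideal.span (Set.range gen))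
    (d : Fin 3 →₀ ℕ) (hd : IsLow d) : coeff d f = 0 := by
  induction hf using Submodule.span_induction generalizing d with
  | mem f hf =>
    obtain ⟨j, rfl⟩ := hf
    rw [coeff_gen]
    unfold IsLow at hd
    fin_cases j <;> simp <;> grind
  | zero => simp
  | add f g _ _ hf hg => rw [coeff_add, hf d hd, hg d hd, add_zero]
  | smul r f _ hf =>
    rw [smul_eq_mul, coeff_mul]
    refine Finset.sum_eq_zero fun p hp => ?_
    rw [hf p.2 (hd.mono (le_of_add_le_right (Finset.HasAntidiagonal.mem_antidiagonal.1 hp).le)), mul_zero]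

/-- The coefficients at the seven monomials `genExpo`. -/
noncomputable def phi : MvPolynomial (Fin 3) ℚ →ₗ[ℚ] (Fin 7 → ℚ) :=
  LinearMap.pi fun i => lcoeff ℚ (genExpo i)

lemma phi_apply (f : MvPolynomial (Fin 3) ℚ) (i : Fin 7) : phi f i = coeff (genExpo i) f := rfl

lemma phi_gen (j : Fin 7) : phi (gen j) = Pi.single j 1 := by
  ext i
  rw [phi_apply, coeff_gen]
  fin_cases j <;> fin_cases i <;> simp [genExpo, expo]

lemma phi_mul (r : MvPolynomial (Fin 3) ℚ) {f : MvPolynomial (Fin 3) ℚ}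
    (hf : f ∈ Ideal.span (Set.range gen)) : phi (r * f) = constantCoeff r • phi f := by
  ext i
  rw [Pi.smul_apply, phi_apply, phi_apply, coeff_mul, smul_eq_mul, constantCoeff_eq]
  refine Finset.sum_eq_single (0, genExpo i) (fun p hp hne => ?_) (by simp)
  have hsum := Finset.HasAntidiagonal.mem_antidiagonal.1 hp
  rw [coeff_eq_zero_of_mem hf p.2, mul_zero]
  refine isLow_of_lt_genExpo i (le_of_add_le_right (Finset.HasAntidiagonal.mem_antidiagonal.1 hp).le) fun h => hne ?_
  rw [h] at hsum
  exact Prod.ext (by simpa using hsum) h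

lemma seven_le_card (s : Finset (MvPolynomial (Fin 3) ℚ))
    (hs : Ideal.span (s : Set (MvPolynomial (Fin 3) ℚ)) = Ideal.span (Set.range gen)) :
    7 ≤ s.card := by
  classical
  have key : ∀ f ∈ Ideal.span (s : Set (MvPolynomial (Fin 3) ℚ)),
      phi f ∈ Submodule.span ℚ (s.image phi : Set (Fin 7 → ℚ)) := by
    intro f hf
    induction hf using Submodule.span_induction with
    | mem f hf => exact Submodule.subset_span (Finset.mem_image_of_mem _ hf)
    | zero => simp
    | add f g _ _ hf hg => rw [map_add]; exact add_mem hf hg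
    | smul r f hf' hf =>
      rw [smul_eq_mul, phi_mul r (hs ▸ hf')]
      exact Submodule.smul_mem _ _ hf
  have htop : Submodule.span ℚ (s.image phi : Set (Fin 7 → ℚ)) = ⊤ := by
    rw [eq_top_iff, ← (Pi.basisFun ℚ (Fin 7)).span_eq, Submodule.span_le]
    rintro _ ⟨j, rfl⟩
    rw [Pi.basisFun_apply, ← phi_gen]
    exact key _ (hs ▸ Ideal.subset_span ⟨j, rfl⟩)
  have h := finrank_span_finset_le_card (R := ℚ) (s.image phi)
  rw [Set.finrank, htop, finrank_top, Module.finrank_fin_fun] at h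
  exact h.trans Finset.card_image_le

lemma minNumGens_eq : minNumGens (Ideal.span (Set.range gen)) = 7 := by
  classical
  have hmem : (Finset.univ.image gen).card ∈ {n : ℕ | ∃ s : Finset (MvPolynomial (Fin 3) ℚ),
      s.card = n ∧ Ideal.span (s : Set (MvPolynomial (Fin 3) ℚ)) = Ideal.span (Set.range gen)} :=
    ⟨_, rfl, by simp⟩
  apply le_antisymm
  · exact (Nat.sInf_le hmem).trans (Finset.card_image_le.trans (by simp))
  · obtain ⟨s, hs, hspan⟩ := Nat.sInf_mem ⟨_, hmem⟩
    exact (seven_le_card s hspan).trans hs.le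

lemma exists_pow_mem (i : Fin 3) :
    ∃ n : ℕ, (X i : MvPolynomial (Fin 3) ℚ) ^ n ∈ Ideal.span (Set.range gen) := by
  have h (j : Fin 7) : gen j ∈ Ideal.span (Set.range gen) := Ideal.subset_span ⟨j, rfl⟩
  fin_cases i
  · refine ⟨4, ?_⟩
    have e : (X 0 : MvPolynomial (Fin 3) ℚ) ^ 4 = x * gen 5 + z * gen 4 := by
      simp only [gen, Matrix.cons_val]
      ring
    exact e ▸ add_mem (Ideal.mul_mem_left _ _ (h 5)) (Ideal.mul_mem_left _ _ (h 4))
  · exact ⟨4, h 6⟩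
  · exact ⟨3, h 0⟩

lemma finiteDimensional_quotient_s12 :
    FiniteDimensional ℚ (MvPolynomial (Fin 3) ℚ ⧸ Ideal.span (Set.range gen)) := by
  have : Algebra.IsIntegral ℚ (MvPolynomial (Fin 3) ℚ ⧸ Ideal.span (Set.range gen)) := by
    refine ⟨fun q => ?_⟩
    obtain ⟨f, rfl⟩ := Ideal.Quotient.mk_surjective q
    induction f using MvPolynomial.induction_on with
    | C a => exact isIntegral_algebraMap (R := ℚ) (x := a)
    | add f g hf hg => rw [map_add]; exact hf.add hg
    | mul_X f i hf =>
      rw [map_mul]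
      refine hf.mul ?_
      obtain ⟨n, hn⟩ := exists_pow_mem i
      refine IsIntegral.of_pow (n := n + 1) n.succ_pos ?_
      rw [← map_pow, Ideal.Quotient.eq_zero_iff_mem.2 (Ideal.pow_mem_of_pow_mem _ hn n.le_succ)]
      exact isIntegral_zero
  exact Algebra.IsIntegral.finite

/-- Substitution of zero for the first `k` variables. -/
noncomputable def van (k : ℕ) : MvPolynomial (Fin 3) ℚ →ₐ[ℚ] MvPolynomial (Fin 3) ℚ :=
  aeval fun i => if (i : ℕ) < k then 0 else X i

/-- The prime ideal generated by the first `k` variables, encoded as the kernel of `van k`. -/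
noncomputable def vanIdeal (k : ℕ) : Ideal (MvPolynomial (Fin 3) ℚ) := RingHom.ker (van k)

instance (k : ℕ) : (vanIdeal k).IsPrime := RingHom.ker_isPrime _

lemma X_mem_vanIdeal (k : ℕ) (i : Fin 3) : X i ∈ vanIdeal k ↔ (i : ℕ) < k := by
  simp [vanIdeal, RingHom.mem_ker, van]

lemma vanIdeal_lt (i : Fin 3) : vanIdeal i < vanIdeal (i + 1) := by
  refine lt_of_le_of_ne (fun f hf => ?_) fun h => ?_
  · have hcomp : (van (i + 1)).comp (van i) = van (i + 1) := by
      ext j : 1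
      rw [AlgHom.comp_apply, van, van, aeval_X, aeval_X]
      by_cases hj : (j : ℕ) < i
      · rw [if_pos hj, if_pos (Nat.lt_succ_of_lt hj), map_zero]
      · rw [if_neg hj, aeval_X]
    have hf' : van i f = 0 := hf
    change van (i + 1) f = 0
    rw [← hcomp, AlgHom.comp_apply, hf', map_zero]
  · have := (X_mem_vanIdeal (i + 1) i).2 (Nat.lt_succ_self _)
    rw [← h, X_mem_vanIdeal] at this
    exact lt_irrefl _ this

lemma height_vanIdeal : (vanIdeal 3).height = 3 := by
  apply le_antisymm
  · have h := Ideal.height_le_ringKrullDim_of_isPrime (I := vanIdeal 3)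
    rw [MvPolynomial.ringKrullDim_of_isNoetherianRing, ringKrullDim_eq_zero_of_field] at h
    simp only [Nat.card_eq_fintype_card, Fintype.card_fin, zero_add] at h
    exact WithBot.coe_le_coe.1 h
  · have h0 := Ideal.height_add_one_le_of_lt_of_isPrime (vanIdeal_lt 0)
    have h1 := Ideal.height_add_one_le_of_lt_of_isPrime (vanIdeal_lt 1)
    have h2 := Ideal.height_add_one_le_of_lt_of_isPrime (vanIdeal_lt 2)
    calc (3 : ℕ∞) = 0 + 1 + 1 + 1 := by norm_num
      _ ≤ (vanIdeal 0).height + 1 + 1 + 1 := by gcongr; exact zero_le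
      _ ≤ (vanIdeal 1).height + 1 + 1 := by gcongr; exact h0
      _ ≤ (vanIdeal 2).height + 1 := by gcongr; exact h1
      _ ≤ (vanIdeal 3).height := h2

/-- A polynomial is congruent to its constant term modulo any ideal containing the variables. -/
lemma sub_C_mem (p : Ideal (MvPolynomial (Fin 3) ℚ)) (hp : ∀ i, X i ∈ p)
    (f : MvPolynomial (Fin 3) ℚ) : f - C (constantCoeff f) ∈ p := by
  induction f using MvPolynomial.induction_on with
  | C a => simp
  | add f g hf hg =>
    rw [map_add, map_add, add_sub_add_comm]
    exact add_mem hf hg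
  | mul_X f i hf => simpa using p.mul_mem_left f (hp i)

lemma eq_vanIdeal (p : Ideal (MvPolynomial (Fin 3) ℚ)) [hpp : p.IsPrime]
    (hp : Ideal.span (Set.range gen) ≤ p) : p = vanIdeal 3 := by
  have hX (i : Fin 3) : X i ∈ p := by
    obtain ⟨n, hn⟩ := exists_pow_mem i
    exact hpp.mem_of_pow_mem n (hp hn)
  -- An ideal containing the variables and a polynomial with nonzero constant term is the unit ideal.
  have key (q q' : Ideal (MvPolynomial (Fin 3) ℚ)) (hq : q.IsPrime) (hX : ∀ i, X i ∈ q)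
      (hX' : ∀ i, X i ∈ q') : q ≤ q' := by
    intro f hf
    have hC : C (constantCoeff f) ∈ q := by
      simpa using sub_mem hf (sub_C_mem q hX f)
    have h0 : constantCoeff f = 0 := by
      by_contra h
      exact hq.ne_top (Ideal.eq_top_of_isUnit_mem _ hC ((IsUnit.mk0 _ h).map C))
    simpa [h0] using sub_C_mem q' hX' f
  have hv (i : Fin 3) : X i ∈ vanIdeal 3 := (X_mem_vanIdeal 3 i).2 i.isLt
  exact le_antisymm (key _ _ hpp hX hv) (key _ _ inferInstance hv hX)

lemma gen_le_vanIdeal : Ideal.span (Set.range gen) ≤ vanIdeal 3 := by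
  rw [Ideal.span_le]
  rintro _ ⟨j, rfl⟩
  change van 3 (gen j) = 0
  fin_cases j <;> simp [gen, van]

lemma idealHeight_eq : idealHeight (Ideal.span (Set.range gen)) = 3 := by
  unfold idealHeight
  have hval (p : PrimeSpectrum (MvPolynomial (Fin 3) ℚ))
      (hp : Ideal.span (Set.range gen) ≤ p.asIdeal) : Order.height p = 3 := by
    rw [← PrimeSpectrum.height_eq_orderHeight, eq_vanIdeal p.asIdeal hp, height_vanIdeal]
  apply le_antisymm
  · refine (iInf₂_le (⟨vanIdeal 3, inferInstance⟩ : PrimeSpectrum _) gen_le_vanIdeal).trans ?_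
    exact (hval _ gen_le_vanIdeal).le
  · exact le_iInf₂ fun p hp => (hval p hp).ge

theorem stmt_12 (I : Ideal (MvPolynomial (Fin 3) ℚ))
    (hI : I = Ideal.span {z^3, x*z^2, x^2*z, x*y^2, x^2*y, x^3 - x*y*z, y^4}) :
    idealHeight I = 3 ∧ minNumGens I = 7 ∧
    FiniteDimensional ℚ (MvPolynomial (Fin 3) ℚ ⧸ I) := by
  rw [← span_range_gen] at hI
  subst hI
  exact ⟨idealHeight_eq, minNumGens_eq, finiteDimensional_quotient_s12⟩
end
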